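/- arXiv:2109.02334 — 7 statements merged into one kernel-verified Lean document; each statement's English description precedes it below -/
import Mathlib

section
/- Let S = ⟨S, δ, L⟩ and S' = ⟨S', δ', L'⟩ be FLTSs witnessed w.r.t. f∃ΔK^0 and Z a crisp simulation between them. Then for every x ∈ S and x' ∈ S', if Z(x,x') holds, then φ^S(x) ≤ φ^S'(x') for all formulas φ of f∃ΔK^0. -/
open unitInterval

noncomputable section
attribute [local instance] Classical.propDecidable

instance : Fact ((0:ℝ) ≤ 1) := ⟨zero_le_one⟩

/-- A left-continuous t-norm on the unit interval `[0,1]`: a commutative, associative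
binary operation with neutral element `1`, increasing in both arguments, that
distributes over suprema of nonempty sets (left-continuity). -/
structure Tnorm where
  mul : I → I → I
  mul_comm : ∀ x y, mul x y = mul y x
  mul_assoc : ∀ x y z, mul (mul x y) z = mul x (mul y z)
  mul_one : ∀ x, mul x 1 = x
  mul_le_mul : ∀ {a b c d : I}, a ≤ b → c ≤ d → mul a c ≤ mul b d
  left_continuous : ∀ (x : I) (s : Set I), s.Nonempty → mul x (sSup s) = sSup (mul x '' s)

/-- The residuum of a t-norm: `(x ⇒ y) = sup {z | z ⊗ x ≤ y}`. -/
def Tnorm.res (T : Tnorm) (x y : I) : I := sSup {z : I | T.mul z x ≤ y}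

/-- A fuzzy labeled transition system over actions `A`, propositions `P`, states `St`. -/
structure FLTS (A P St : Type) where
  delta : St → A → St → I
  label : St → P → I

/-- A crisp simulation between two FLTSs. -/
def IsSimulation {A P S S' : Type} (M : FLTS A P S) (M' : FLTS A P S')
    (Z : S → S' → Prop) : Prop :=
  (∀ x x', Z x x' → ∀ p, M.label x p ≤ M'.label x' p) ∧
  (∀ x y x' (ρ : A), Z x x' → 0 < M.delta x ρ y →
    ∃ y', M.delta x ρ y ≤ M'.delta x' ρ y' ∧ Z y y')

/-- Formulas of f∃ΔK^0. -/
inductive KForm (A P : Type) : Type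
  | prop : P → KForm A P
  | baaz : KForm A P → KForm A P
  | and : KForm A P → KForm A P → KForm A P
  | impl : I → KForm A P → KForm A P
  | dia : A → KForm A P → KForm A P

/-- Semantics of f∃ΔK^0 formulas. -/
def kSem (T : Tnorm) {A P St : Type} (M : FLTS A P St) : KForm A P → St → I
  | .prop p, x => M.label x p
  | .baaz φ, x => if kSem T M φ x = 1 then 1 else 0
  | .and φ ψ, x => min (kSem T M φ x) (kSem T M ψ x)
  | .impl a φ, x => T.res a (kSem T M φ x)
  | .dia ρ φ, x => ⨆ y, T.mul (M.delta x ρ y) (kSem T M φ y)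

/-- An FLTS is witnessed w.r.t. f∃ΔK^0: the supremum in the semantic clause for
`⟨ϱ⟩φ` is always attained by a greatest element. -/
def WitnessedK (T : Tnorm) {A P St : Type} (M : FLTS A P St) : Prop :=
  ∀ (φ : KForm A P) (ρ : A) (x : St), ∃ y : St, ∀ z : St,
    T.mul (M.delta x ρ z) (kSem T M φ z) ≤ T.mul (M.delta x ρ y) (kSem T M φ y)

/-- Formulas of f∃ΔK^0 are preserved under crisp simulations between FLTSs
witnessed w.r.t. f∃ΔK^0. -/
theorem preservation_simulation_feK0
    {A P S S' : Type} [Nonempty A] [Nonempty P] [Nonempty S] [Nonempty S']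
    (T : Tnorm) (M : FLTS A P S) (M' : FLTS A P S')
    (hM : WitnessedK T M) (hM' : WitnessedK T M')
    (Z : S → S' → Prop) (hZ : IsSimulation M M' Z) :
    ∀ (x : S) (x' : S'), Z x x' →
      ∀ φ : KForm A P, kSem T M φ x ≤ kSem T M' φ x' := by
  intro x x' hxx φ
  induction φ generalizing x x' with
  | prop p => exact hZ.1 x x' hxx p
  | baaz φ ih =>
    have h := ih x x' hxx
    simp only [kSem]
    by_cases h1 : kSem T M φ x = 1
    · have h2 : kSem T M' φ x' = 1 := le_antisymm unitInterval.le_one' (h1 ▸ h)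
      rw [if_pos h1, if_pos h2]
    · rw [if_neg h1]
      exact unitInterval.nonneg'
  | and φ ψ ih1 ih2 =>
    simp only [kSem]
    exact min_le_min (ih1 x x' hxx) (ih2 x x' hxx)
  | impl a φ ih =>
    simp only [kSem, Tnorm.res]
    exact sSup_le_sSup fun z hz => le_trans hz (ih x x' hxx)
  | dia ρ φ ih =>
    simp only [kSem]
    refine iSup_le fun y => ?_
    by_cases h0 : 0 < M.delta x ρ y
    · obtain ⟨y', hd, hy⟩ := hZ.2 x y x' ρ hxx h0
      exact le_trans (T.mul_le_mul hd (ih y y' hy))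
        (le_iSup (fun y => T.mul (M'.delta x' ρ y) (kSem T M' φ y)) y')
    · have h1 : M.delta x ρ y = 0 := le_antisymm (not_lt.mp h0) unitInterval.nonneg'
      have h2 : T.mul (M.delta x ρ y) (kSem T M φ y) ≤ 0 := by
        rw [h1]
        exact le_trans (T.mul_le_mul le_rfl unitInterval.le_one') (T.mul_one 0).le
      exact le_trans h2 unitInterval.nonneg'
end
end

section
/- Every image-finite FLTS is modally saturated w.r.t. f∃ΔK^0. -/
open unitInterval

noncomputable section
attribute [local instance] Classical.propDecidable

/-- An FLTS is image-finite if every state has finitely many positive successors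
for each action. -/
def ImageFinite {A P St : Type} (M : FLTS A P St) : Prop :=
  ∀ (x : St) (ρ : A), {y : St | 0 < M.delta x ρ y}.Finite

/-- An FLTS is modally saturated w.r.t. f∃ΔK^0. Here `Ψ.inf (fun φ => kSem T M φ y)`
is the value of the conjunction `⋀Ψ` at `y` (the empty conjunction has value `1 = ⊤`). -/
def ModallySaturated (T : Tnorm) {A P St : Type} (M : FLTS A P St) : Prop :=
  ∀ (x : St) (a : I) (ρ : A) (Γ : Set (KForm A P)), 0 < a → Γ.Infinite →
    (∀ Ψ : Finset (KForm A P), ↑Ψ ⊆ Γ →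
      ∃ y : St, a ≤ T.mul (M.delta x ρ y) (Ψ.inf fun φ => kSem T M φ y)) →
    ∃ y : St, a ≤ M.delta x ρ y ∧ ∀ φ ∈ Γ, 0 < kSem T M φ y

/-- Every image-finite FLTS is modally saturated w.r.t. f∃ΔK^0. -/
theorem imageFinite_modallySaturated
    {A P St : Type} [Nonempty A] [Nonempty P] [Nonempty St]
    (T : Tnorm) (M : FLTS A P St) (h : ImageFinite M) :
    ModallySaturated T M := by
  intro x a ρ Γ ha _ hfin
  by_contra! hc
  have hc' : ∀ y : St, ∃ φ : KForm A P, a ≤ M.delta x ρ y → φ ∈ Γ ∧ kSem T M φ y ≤ 0 := by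
    intro y
    by_cases hy : a ≤ M.delta x ρ y
    · obtain ⟨φ, h1, h2⟩ := hc y hy
      exact ⟨φ, fun _ => ⟨h1, h2⟩⟩
    · exact ⟨KForm.prop (Classical.arbitrary P), fun h' => absurd h' hy⟩
  choose f hf using hc'
  have hF : {y : St | a ≤ M.delta x ρ y}.Finite :=
    (h x ρ).subset fun y hy => lt_of_lt_of_le ha hy
  obtain ⟨y, hy⟩ := hfin (hF.toFinset.image f) (by
    intro φ hφ
    simp only [Finset.coe_image, Set.mem_image, Finset.mem_coe, Set.Finite.mem_toFinset,
      Set.mem_setOf_eq] at hφ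
    obtain ⟨y, hy, rfl⟩ := hφ
    exact (hf y hy).1)
  have hd : a ≤ M.delta x ρ y := by
    refine hy.trans ((T.mul_le_mul le_rfl unitInterval.le_one').trans ?_)
    rw [T.mul_one]
  have hinf : ((hF.toFinset.image f).inf fun φ => kSem T M φ y) ≤ 0 :=
    (Finset.inf_le (Finset.mem_image_of_mem f (by simpa using hd))).trans (hf y hd).2
  have h0 : a ≤ 0 := by
    refine hy.trans ((T.mul_le_mul unitInterval.le_one' hinf).trans ?_)
    rw [T.mul_comm, T.mul_one]
  exact absurd ha (not_lt.mpr h0)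
end
end

section
/- Let S = ⟨S, δ, L⟩ and S' = ⟨S', δ', L'⟩ be FLTSs that are witnessed and modally saturated w.r.t. f∃ΔK^0. Then the relation Z = {(x,x') ∈ S × S' | φ^S(x) ≤ φ^S'(x') for all formulas φ of f∃ΔK^0} is the largest crisp simulation between S and S' (i.e., Z is a simulation and every simulation between S and S' is contained in Z). -/
open unitInterval

noncomputable section
attribute [local instance] Classical.propDecidable

theorem Tnorm.zero_mul_aux (T : Tnorm) (b : I) : T.mul 0 b ≤ 0 := by
  have h := T.mul_le_mul (le_refl (0:I)) (unitInterval.le_one' (t := b))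
  rwa [T.mul_one] at h

theorem Tnorm.res_mono (T : Tnorm) (a : I) {b c : I} (h : b ≤ c) : T.res a b ≤ T.res a c :=
  sSup_le_sSup fun _ hz => le_trans hz h

theorem Tnorm.one_mul_aux (T : Tnorm) (a : I) : T.mul 1 a = a := by
  rw [T.mul_comm, T.mul_one]

theorem Tnorm.res_eq_one_iff (T : Tnorm) (a b : I) : T.res a b = 1 ↔ a ≤ b := by
  constructor
  · intro h
    have hne : ({z : I | T.mul z a ≤ b}).Nonempty :=
      ⟨0, le_trans (T.zero_mul_aux a) unitInterval.nonneg'⟩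
    have h2 := T.left_continuous a _ hne
    have h3 : sSup {z : I | T.mul z a ≤ b} = 1 := h
    rw [h3, T.mul_one] at h2
    rw [h2]
    apply sSup_le
    rintro _ ⟨z, hz, rfl⟩
    rw [T.mul_comm]
    exact hz
  · intro h
    apply le_antisymm unitInterval.le_one'
    apply le_sSup
    show T.mul 1 a ≤ b
    rwa [T.one_mul_aux]

theorem kForm_infinite (A P : Type) [Nonempty P] : Infinite (KForm A P) := by
  obtain ⟨p⟩ := ‹Nonempty P›
  refine Infinite.of_injective (fun n : ℕ => (KForm.baaz)^[n] (KForm.prop p : KForm A P)) ?_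
  intro m n h
  induction m generalizing n with
  | zero =>
    cases n with
    | zero => rfl
    | succ n => simp [Function.iterate_succ_apply'] at h
  | succ m ih =>
    cases n with
    | zero => simp [Function.iterate_succ_apply'] at h
    | succ n =>
      simp only [Function.iterate_succ_apply', KForm.baaz.injEq] at h
      rw [ih h]

theorem exists_conj {A P : Type} [Nonempty P] (T : Tnorm) (Ψ : Finset (KForm A P)) :
    ∃ χ : KForm A P, ∀ (St : Type) (M : FLTS A P St) (y : St),
      kSem T M χ y = Ψ.inf fun φ => kSem T M φ y := by
  induction Ψ using Finset.induction_on with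
  | empty =>
    obtain ⟨p⟩ := ‹Nonempty P›
    refine ⟨.impl 0 (.prop p), fun St M y => ?_⟩
    rw [Finset.inf_empty]
    apply le_antisymm le_top
    have h : kSem T M (.impl 0 (.prop p)) y = 1 :=
      (T.res_eq_one_iff _ _).2 unitInterval.nonneg'
    rw [h]
    exact unitInterval.le_one'
  | insert φ Ψ _ ih =>
    obtain ⟨χ, hχ⟩ := ih
    refine ⟨.and φ χ, fun St M y => ?_⟩
    rw [Finset.inf_insert, ← hχ]
    rfl

/-- Hennessy-Milner property of crisp simulations: for FLTSs witnessed and modally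
saturated w.r.t. f∃ΔK^0, the relation consisting of the pairs `(x,x')` with
`φ^S(x) ≤ φ^S'(x')` for all f∃ΔK^0 formulas `φ` is the largest crisp simulation. -/
theorem hennessyMilner_simulation_feK0
    {A P S S' : Type} [Nonempty A] [Nonempty P] [Nonempty S] [Nonempty S']
    (T : Tnorm) (M : FLTS A P S) (M' : FLTS A P S')
    (hwM : WitnessedK T M) (hwM' : WitnessedK T M')
    (hsM : ModallySaturated T M) (hsM' : ModallySaturated T M') :
    IsSimulation M M' (fun x x' => ∀ φ : KForm A P, kSem T M φ x ≤ kSem T M' φ x') ∧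
    (∀ Z : S → S' → Prop, IsSimulation M M' Z →
      ∀ x x', Z x x' → ∀ φ : KForm A P, kSem T M φ x ≤ kSem T M' φ x') := by
  classical
  constructor
  · refine ⟨fun x x' h p => h (.prop p), ?_⟩
    intro x y x' ρ h hpos
    let f : KForm A P → KForm A P := fun φ => .baaz (.impl (kSem T M φ y) φ)
    have hf : Function.Injective f := by
      intro φ ψ hh
      simp only [f, KForm.baaz.injEq, KForm.impl.injEq] at hh
      exact hh.2
    haveI := kForm_infinite A P
    obtain ⟨y', hy', hall⟩ := hsM' x' (M.delta x ρ y) ρ (Set.range f) hpos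
      (Set.infinite_range_of_injective hf) (by
        intro Ψ hΨ
        obtain ⟨χ, hχ⟩ := exists_conj T Ψ
        obtain ⟨y', hy'⟩ := hwM' χ ρ x'
        refine ⟨y', ?_⟩
        rw [← hχ]
        have h1 : (1 : I) ≤ kSem T M χ y := by
          rw [hχ]
          apply Finset.le_inf
          intro φ hφ
          obtain ⟨ψ, rfl⟩ := hΨ hφ
          have : kSem T M (.impl (kSem T M ψ y) ψ) y = 1 :=
            (T.res_eq_one_iff _ _).2 le_rfl
          simp only [f]
          rw [kSem, if_pos this]
        calc M.delta x ρ y = T.mul (M.delta x ρ y) 1 := (T.mul_one _).symm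
          _ ≤ T.mul (M.delta x ρ y) (kSem T M χ y) := T.mul_le_mul le_rfl h1
          _ ≤ kSem T M (.dia ρ χ) x :=
            le_iSup (fun y => T.mul (M.delta x ρ y) (kSem T M χ y)) y
          _ ≤ kSem T M' (.dia ρ χ) x' := h _
          _ ≤ _ := iSup_le hy')
    refine ⟨y', hy', fun φ => ?_⟩
    have h0 := hall (f φ) ⟨φ, rfl⟩
    by_contra hlt
    have hne : ¬ kSem T M' (.impl (kSem T M φ y) φ) y' = 1 :=
      fun hc => hlt ((T.res_eq_one_iff _ _).1 hc)
    simp only [f] at h0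
    rw [kSem, if_neg hne] at h0
    exact lt_irrefl _ h0
  · intro Z hZ x x' hxx φ
    induction φ generalizing x x' with
    | prop p => exact hZ.1 x x' hxx p
    | baaz φ ih =>
      have := ih x x' hxx
      rw [kSem, kSem]
      by_cases h1 : kSem T M φ x = 1
      · rw [h1] at this
        rw [if_pos h1, if_pos (le_antisymm unitInterval.le_one' this)]
      · rw [if_neg h1]
        exact unitInterval.nonneg'
    | and φ ψ ih1 ih2 => exact min_le_min (ih1 x x' hxx) (ih2 x x' hxx)
    | impl a φ ih => exact T.res_mono a (ih x x' hxx)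
    | dia ρ φ ih =>
      refine iSup_le fun y => ?_
      by_cases h0 : 0 < M.delta x ρ y
      · obtain ⟨y', hd, hz⟩ := hZ.2 x y x' ρ hxx h0
        exact le_trans (T.mul_le_mul hd (ih y y' hz))
          (le_iSup (fun y => T.mul (M'.delta x' ρ y) (kSem T M' φ y)) y')
      · have : M.delta x ρ y = 0 := le_antisymm (not_lt.1 h0) unitInterval.nonneg'
        rw [this]
        exact le_trans (T.zero_mul_aux _) unitInterval.nonneg'
end
end

section
/- Let S = ⟨S, δ, L⟩ and S' = ⟨S', δ', L'⟩ be FLTSs witnessed w.r.t. fposΔK and Z a crisp directed simulation between them. Then for every x ∈ S and x' ∈ S', if Z(x,x') holds, then φ^S(x) ≤ φ^S'(x') for all formulas φ of fposΔK. -/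
open unitInterval

noncomputable section
attribute [local instance] Classical.propDecidable

/-- A crisp directed simulation between two FLTSs. -/
def IsDirSimulation {A P S S' : Type} (M : FLTS A P S) (M' : FLTS A P S')
    (Z : S → S' → Prop) : Prop :=
  (∀ x x', Z x x' → ∀ p, M.label x p ≤ M'.label x' p) ∧
  (∀ x y x' (ρ : A), Z x x' → 0 < M.delta x ρ y →
    ∃ y', M.delta x ρ y ≤ M'.delta x' ρ y' ∧ Z y y') ∧
  (∀ x x' y' (ρ : A), Z x x' → 0 < M'.delta x' ρ y' →
    ∃ y, M'.delta x' ρ y' ≤ M.delta x ρ y ∧ Z y y')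

/-- Formulas of fposΔK. -/
inductive PKForm (A P : Type) : Type
  | const : I → PKForm A P
  | prop : P → PKForm A P
  | baaz : PKForm A P → PKForm A P
  | and : PKForm A P → PKForm A P → PKForm A P
  | or : PKForm A P → PKForm A P → PKForm A P
  | impl : I → PKForm A P → PKForm A P
  | box : A → PKForm A P → PKForm A P
  | dia : A → PKForm A P → PKForm A P

/-- Semantics of fposΔK formulas. -/
def pkSem (T : Tnorm) {A P St : Type} (M : FLTS A P St) : PKForm A P → St → I
  | .const a, _ => a
  | .prop p, x => M.label x p
  | .baaz φ, x => if pkSem T M φ x = 1 then 1 else 0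
  | .and φ ψ, x => min (pkSem T M φ x) (pkSem T M ψ x)
  | .or φ ψ, x => max (pkSem T M φ x) (pkSem T M ψ x)
  | .impl a φ, x => T.res a (pkSem T M φ x)
  | .box ρ φ, x => ⨅ y, T.res (M.delta x ρ y) (pkSem T M φ y)
  | .dia ρ φ, x => ⨆ y, T.mul (M.delta x ρ y) (pkSem T M φ y)

/-- An FLTS is witnessed w.r.t. fposΔK: the supremum in the clause for `⟨ϱ⟩φ`
(resp. the infimum in the clause for `[ϱ]φ`) is attained by a greatest
(resp. least) element. -/
def WitnessedPK (T : Tnorm) {A P St : Type} (M : FLTS A P St) : Prop :=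
  (∀ (φ : PKForm A P) (ρ : A) (x : St), ∃ y : St, ∀ z : St,
    T.mul (M.delta x ρ z) (pkSem T M φ z) ≤ T.mul (M.delta x ρ y) (pkSem T M φ y)) ∧
  (∀ (φ : PKForm A P) (ρ : A) (x : St), ∃ y : St, ∀ z : St,
    T.res (M.delta x ρ y) (pkSem T M φ y) ≤ T.res (M.delta x ρ z) (pkSem T M φ z))

/-- Formulas of fposΔK are preserved under crisp directed simulations between FLTSs
witnessed w.r.t. fposΔK. -/
theorem preservation_dirSimulation_fposK
    {A P S S' : Type} [Nonempty A] [Nonempty P] [Nonempty S] [Nonempty S']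
    (T : Tnorm) (M : FLTS A P S) (M' : FLTS A P S')
    (hM : WitnessedPK T M) (hM' : WitnessedPK T M')
    (Z : S → S' → Prop) (hZ : IsDirSimulation M M' Z) :
    ∀ (x : S) (x' : S'), Z x x' →
      ∀ φ : PKForm A P, pkSem T M φ x ≤ pkSem T M' φ x' := by
  have res_mono : ∀ {a b c d : I}, b ≤ a → c ≤ d → T.res a c ≤ T.res b d := by
    intro a b c d h1 h2
    apply sSup_le_sSup
    intro z hz
    exact le_trans (T.mul_le_mul le_rfl h1) (le_trans hz h2)
  have mul_zero' : ∀ z, T.mul z 0 = 0 := by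
    intro z
    apply le_antisymm _ unitInterval.nonneg'
    rw [T.mul_comm]
    exact le_trans (T.mul_le_mul le_rfl unitInterval.le_one') (T.mul_one 0).le
  obtain ⟨h1, h2, h3⟩ := hZ
  intro x x' hx φ
  induction φ generalizing x x' with
  | const a => exact le_rfl
  | prop p => exact h1 x x' hx p
  | baaz φ ih =>
    have := ih x x' hx
    simp only [pkSem]
    by_cases h : pkSem T M φ x = 1
    · rw [h] at this
      rw [if_pos h, if_pos (le_antisymm unitInterval.le_one' this)]
    · rw [if_neg h]
      exact unitInterval.nonneg'
  | and φ ψ ih1 ih2 => exact min_le_min (ih1 x x' hx) (ih2 x x' hx)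
  | or φ ψ ih1 ih2 => exact max_le_max (ih1 x x' hx) (ih2 x x' hx)
  | impl a φ ih => exact res_mono le_rfl (ih x x' hx)
  | box ρ φ ih =>
    simp only [pkSem]
    apply le_iInf
    intro y'
    by_cases h : 0 < M'.delta x' ρ y'
    · obtain ⟨y, hy, hz⟩ := h3 x x' y' ρ hx h
      exact le_trans (iInf_le _ y) (res_mono hy (ih y y' hz))
    · have h0 : M'.delta x' ρ y' = 0 := le_antisymm (not_lt.mp h) unitInterval.nonneg'
      refine le_trans unitInterval.le_one' (le_sSup ?_)
      rw [h0]
      exact (mul_zero' 1).le.trans unitInterval.nonneg'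
  | dia ρ φ ih =>
    simp only [pkSem]
    apply iSup_le
    intro y
    by_cases h : 0 < M.delta x ρ y
    · obtain ⟨y', hy, hz⟩ := h2 x y x' ρ hx h
      exact le_trans (T.mul_le_mul hy (ih y y' hz))
        (le_iSup (fun y' => T.mul (M'.delta x' ρ y') (pkSem T M' φ y')) y')
    · have h0 : M.delta x ρ y = 0 := le_antisymm (not_lt.mp h) unitInterval.nonneg'
      rw [h0, T.mul_comm, mul_zero']
      exact unitInterval.nonneg'
end
end

section
/- Let S = ⟨S, δ, L⟩ and S' = ⟨S', δ', L'⟩ be image-finite FLTSs and let x ∈ S, x' ∈ S'. Then there exists a crisp directed simulation Z between S and S' with Z(x,x') if and only if φ^S(x) ≤ φ^S'(x') for all formulas φ of fposΔK. -/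
open unitInterval

noncomputable section
attribute [local instance] Classical.propDecidable

theorem Tnorm.le_res (T : Tnorm) {x y z : I} : z ≤ T.res x y ↔ T.mul z x ≤ y := by
  constructor
  · intro h
    have h0 : (0:I) ∈ {z : I | T.mul z x ≤ y} := by
      have h1 : T.mul 0 x ≤ T.mul 0 1 := T.mul_le_mul le_rfl le_top
      rw [T.mul_one] at h1
      exact h1.trans bot_le
    have h2 : T.mul z x ≤ T.mul (T.res x y) x := T.mul_le_mul h le_rfl
    refine h2.trans ?_
    rw [T.mul_comm]
    unfold Tnorm.res
    rw [T.left_continuous _ _ ⟨0, h0⟩]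
    apply sSup_le
    rintro _ ⟨w, hw, rfl⟩
    rw [T.mul_comm]
    exact hw
  · intro h
    exact le_sSup h

theorem Tnorm.one_mul (T : Tnorm) (x : I) : T.mul 1 x = x := by
  rw [T.mul_comm, T.mul_one]

theorem Tnorm.mul_zero (T : Tnorm) (x : I) : T.mul x 0 = 0 := by
  have h1 : T.mul x 0 ≤ T.mul 1 0 := T.mul_le_mul le_top le_rfl
  rw [T.one_mul] at h1
  exact le_antisymm h1 bot_le

theorem Tnorm.res_eq_one (T : Tnorm) {x y : I} : T.res x y = 1 ↔ x ≤ y := by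
  rw [← T.one_mul x, ← T.le_res, T.one_mul]
  exact ⟨fun h => h.ge, fun h => le_antisymm le_top h⟩

theorem Tnorm.res_mono_s11 (T : Tnorm) {x x' y y' : I} (hx : x' ≤ x) (hy : y ≤ y') :
    T.res x y ≤ T.res x' y' := by
  rw [T.le_res]
  exact (T.mul_le_mul le_rfl hx).trans ((T.le_res.1 le_rfl).trans hy)

theorem pk_sound {A P S S' : Type} (T : Tnorm) (M : FLTS A P S) (M' : FLTS A P S')
    (Z : S → S' → Prop) (hZ : IsDirSimulation M M' Z) (φ : PKForm A P) :
    ∀ x x', Z x x' → pkSem T M φ x ≤ pkSem T M' φ x' := by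
  obtain ⟨h1, h2, h3⟩ := hZ
  induction φ with
  | const a => intro x x' _; exact le_rfl
  | prop p => intro x x' h; exact h1 x x' h p
  | baaz φ ih =>
    intro x x' h
    have := ih x x' h
    simp only [pkSem]
    by_cases hx : pkSem T M φ x = 1
    · rw [hx] at this
      have hx1 : pkSem T M' φ x' = 1 := le_antisymm le_top this
      rw [if_pos hx, if_pos hx1]
    · rw [if_neg hx]; exact bot_le
  | and φ ψ i j => intro x x' h; exact min_le_min (i x x' h) (j x x' h)
  | or φ ψ i j => intro x x' h; exact max_le_max (i x x' h) (j x x' h)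
  | impl a φ i => intro x x' h; exact T.res_mono_s11 le_rfl (i x x' h)
  | box ρ φ ih =>
    intro x x' h
    simp only [pkSem]
    apply le_iInf
    intro y'
    by_cases hd : 0 < M'.delta x' ρ y'
    · obtain ⟨y, hy, hz⟩ := h3 x x' y' ρ h hd
      exact (iInf_le _ y).trans (T.res_mono_s11 hy (ih y y' hz))
    · have hd' : M'.delta x' ρ y' ≤ 0 := not_lt.1 hd
      rw [T.res_eq_one.2 (hd'.trans bot_le)]
      exact le_top
  | dia ρ φ ih =>
    intro x x' h
    simp only [pkSem]
    apply iSup_le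
    intro y
    by_cases hd : 0 < M.delta x ρ y
    · obtain ⟨y', hy, hz⟩ := h2 x y x' ρ h hd
      exact (T.mul_le_mul hy (ih y y' hz)).trans
        (le_iSup (fun y' => T.mul (M'.delta x' ρ y') (pkSem T M' φ y')) y')
    · have hd' : M.delta x ρ y = 0 := le_antisymm (not_lt.1 hd) bot_le
      rw [hd', T.mul_comm, T.mul_zero]
      exact bot_le

theorem pk_gap {A P S : Type} (M : FLTS A P S) (hM : ImageFinite M) (x : S) (ρ : A) (d : I)
    (hd : 0 < d) : ∃ c, c < d ∧ ∀ y, M.delta x ρ y < d → M.delta x ρ y ≤ c := by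
  have key : ∀ s : Set S, s.Finite →
      ∃ c, c < d ∧ ∀ y ∈ s, M.delta x ρ y < d → M.delta x ρ y ≤ c := by
    intro s hs
    induction s, hs using Set.Finite.induction_on with
    | empty => exact ⟨0, hd, by simp⟩
    | @insert a s _ _ ih =>
      obtain ⟨c, hc, h⟩ := ih
      by_cases ha : M.delta x ρ a < d
      · refine ⟨max c (M.delta x ρ a), max_lt hc ha, ?_⟩
        rintro y (rfl | hy) hyd
        · exact le_max_right _ _
        · exact (h y hy hyd).trans (le_max_left _ _)
      · refine ⟨c, hc, ?_⟩
        rintro y (rfl | hy) hyd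
        · exact absurd hyd ha
        · exact h y hy hyd
  obtain ⟨c, hc, h⟩ := key _ (hM x ρ)
  refine ⟨c, hc, fun y hy => ?_⟩
  by_cases h0 : 0 < M.delta x ρ y
  · exact h y h0 hy
  · exact (not_lt.1 h0).trans bot_le

theorem pk_sep {A P S S' : Type} (T : Tnorm) (M : FLTS A P S) (M' : FLTS A P S') (y : S) (y' : S')
    (h : ¬ ∀ φ : PKForm A P, pkSem T M φ y ≤ pkSem T M' φ y') :
    ∃ ψ : PKForm A P, pkSem T M ψ y = 1 ∧ pkSem T M' ψ y' = 0 := by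
  push Not at h
  obtain ⟨φ, hφ⟩ := h
  refine ⟨.baaz (.impl (pkSem T M φ y) φ), ?_, ?_⟩
  · have h1 : pkSem T M (.impl (pkSem T M φ y) φ) y = 1 := T.res_eq_one.2 le_rfl
    exact if_pos h1
  · have h1 : ¬ pkSem T M' (.impl (pkSem T M φ y) φ) y' = 1 :=
      fun hh => not_le.2 hφ (T.res_eq_one.1 hh)
    exact if_neg h1

theorem pk_conj {A P S S' : Type} (T : Tnorm) (M : FLTS A P S) (M' : FLTS A P S') (y : S)
    (s : Set S') (hs : s.Finite)
    (h : ∀ y' ∈ s, ∃ ψ : PKForm A P, pkSem T M ψ y = 1 ∧ pkSem T M' ψ y' = 0) :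
    ∃ ψ : PKForm A P, pkSem T M ψ y = 1 ∧ ∀ y' ∈ s, pkSem T M' ψ y' = 0 := by
  induction s, hs using Set.Finite.induction_on with
  | empty => exact ⟨.const 1, rfl, by simp⟩
  | @insert a s _ _ ih =>
    obtain ⟨ψ, h1, h2⟩ := ih fun y' hy' => h y' (Or.inr hy')
    obtain ⟨χ, h3, h4⟩ := h a (Or.inl rfl)
    refine ⟨.and χ ψ, ?_, ?_⟩
    · simp only [pkSem]; rw [h1, h3, min_self]
    · rintro y' (rfl | hy')
      · simp only [pkSem]; rw [h4]; exact min_eq_left bot_le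
      · simp only [pkSem]; rw [h2 y' hy']; exact min_eq_right bot_le

theorem pk_disj {A P S S' : Type} (T : Tnorm) (M : FLTS A P S) (M' : FLTS A P S') (y' : S')
    (s : Set S) (hs : s.Finite)
    (h : ∀ y ∈ s, ∃ ψ : PKForm A P, pkSem T M ψ y = 1 ∧ pkSem T M' ψ y' = 0) :
    ∃ ψ : PKForm A P, pkSem T M' ψ y' = 0 ∧ ∀ y ∈ s, pkSem T M ψ y = 1 := by
  induction s, hs using Set.Finite.induction_on with
  | empty => exact ⟨.const 0, rfl, by simp⟩
  | @insert a s _ _ ih =>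
    obtain ⟨ψ, h1, h2⟩ := ih fun y' hy' => h y' (Or.inr hy')
    obtain ⟨χ, h3, h4⟩ := h a (Or.inl rfl)
    refine ⟨.or χ ψ, ?_, ?_⟩
    · simp only [pkSem]; rw [h1, h4, max_self]
    · rintro y (rfl | hy)
      · simp only [pkSem]; rw [h3]; exact max_eq_left le_top
      · simp only [pkSem]; rw [h2 y hy]; exact max_eq_right le_top

/-- For image-finite FLTSs, a state `x'` directedly simulates `x` iff `x'` satisfies
all fposΔK formulas at least as much as `x` does. -/
theorem dirSimulation_iff_fposK
    {A P S S' : Type} [Nonempty A] [Nonempty P] [Nonempty S] [Nonempty S']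
    (T : Tnorm) (M : FLTS A P S) (M' : FLTS A P S')
    (hM : ImageFinite M) (hM' : ImageFinite M')
    (x : S) (x' : S') :
    (∃ Z : S → S' → Prop, IsDirSimulation M M' Z ∧ Z x x') ↔
      (∀ φ : PKForm A P, pkSem T M φ x ≤ pkSem T M' φ x') := by
  constructor
  · rintro ⟨Z, hZ, hx⟩ φ
    exact pk_sound T M M' Z hZ φ x x' hx
  · intro hx
    refine ⟨fun x x' => ∀ φ : PKForm A P, pkSem T M φ x ≤ pkSem T M' φ x', ⟨?_, ?_, ?_⟩, hx⟩
    · intro x x' h p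
      exact h (.prop p)
    · intro x y x' ρ h hd
      by_contra hcon
      push Not at hcon
      obtain ⟨c, hc, hgap⟩ := pk_gap M' hM' x' ρ _ hd
      obtain ⟨ψ, h1, h2⟩ := pk_conj T M M' y {y' | M.delta x ρ y ≤ M'.delta x' ρ y'}
        ((hM' x' ρ).subset fun y' hy' => lt_of_lt_of_le hd hy')
        (fun y' hy' => pk_sep T M M' y y' (by
          obtain ⟨φ, hφ⟩ := hcon y' hy'
          exact fun hh => absurd (hh φ) (not_le.2 hφ)))
      have h3 := h (.dia ρ ψ)
      simp only [pkSem] at h3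
      have h4 := le_iSup (fun y => T.mul (M.delta x ρ y) (pkSem T M ψ y)) y
      simp only [h1, T.mul_one] at h4
      refine absurd (h4.trans (h3.trans (iSup_le fun y' => ?_))) (not_le.2 hc)
      by_cases hy' : M.delta x ρ y ≤ M'.delta x' ρ y'
      · rw [h2 y' hy', T.mul_zero]; exact bot_le
      · have h5 : T.mul (M'.delta x' ρ y') (pkSem T M' ψ y') ≤ T.mul (M'.delta x' ρ y') 1 :=
          T.mul_le_mul le_rfl le_top
        rw [T.mul_one] at h5
        exact h5.trans (hgap y' (not_le.1 hy'))
    · intro x x' y' ρ h hd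
      by_contra hcon
      push Not at hcon
      obtain ⟨c, hc, hgap⟩ := pk_gap M hM x ρ _ hd
      obtain ⟨ψ, h1, h2⟩ := pk_disj T M M' y' {y | M'.delta x' ρ y' ≤ M.delta x ρ y}
        ((hM x ρ).subset fun y hy => lt_of_lt_of_le hd hy)
        (fun y hy => pk_sep T M M' y y' (by
          obtain ⟨φ, hφ⟩ := hcon y hy
          exact fun hh => absurd (hh φ) (not_le.2 hφ)))
      have h3 := h (.box ρ (.or ψ (.const c)))
      simp only [pkSem] at h3
      have h4 := iInf_le (fun y' => T.res (M'.delta x' ρ y') (max (pkSem T M' ψ y') c)) y'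
      have h5 : (1:I) ≤ ⨅ y, T.res (M.delta x ρ y) (max (pkSem T M ψ y) c) := by
        apply le_iInf
        intro y
        refine (T.res_eq_one.2 ?_).ge
        by_cases hy : M'.delta x' ρ y' ≤ M.delta x ρ y
        · rw [h2 y hy]; exact le_max_of_le_left le_top
        · exact le_max_of_le_right (hgap y (not_le.1 hy))
      have h6 := T.res_eq_one.1 (le_antisymm le_top (h5.trans (h3.trans h4)))
      rw [h1] at h6
      exact absurd (h6.trans (max_le bot_le le_rfl)) (not_le.2 hc)
end
end

section
/- For any two FLTSs S and S', the largest crisp simulation between S and S' exists (i.e., there is a simulation containing every simulation between S and S'). Moreover, for any FLTS S, the largest crisp auto-simulation of S is a pre-order (reflexive and transitive relation) on its set of states. -/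
open unitInterval

noncomputable section

/-- The largest crisp simulation between two FLTSs exists, and the largest crisp
auto-simulation of an FLTS is a pre-order (reflexive and transitive). -/
theorem largest_simulation_exists_and_preorder {A P : Type} [Nonempty A] [Nonempty P] :
    (∀ (S S' : Type) [Nonempty S] [Nonempty S'] (M : FLTS A P S) (M' : FLTS A P S'),
      ∃ Z : S → S' → Prop, IsSimulation M M' Z ∧
        ∀ Z' : S → S' → Prop, IsSimulation M M' Z' → ∀ x x', Z' x x' → Z x x') ∧
    (∀ (S : Type) [Nonempty S] (M : FLTS A P S) (Z : S → S → Prop),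
      IsSimulation M M Z →
      (∀ Z' : S → S → Prop, IsSimulation M M Z' → ∀ x y, Z' x y → Z x y) →
      Reflexive Z ∧ Transitive Z) := by
  refine ⟨?_, ?_⟩
  · intro S S' _ _ M M'
    refine ⟨fun x x' => ∃ Z, IsSimulation M M' Z ∧ Z x x', ⟨?_, ?_⟩, ?_⟩
    · rintro x x' ⟨Z, hZ, hx⟩ p
      exact hZ.1 x x' hx p
    · rintro x y x' ρ ⟨Z, hZ, hx⟩ hpos
      obtain ⟨y', h1, h2⟩ := hZ.2 x y x' ρ hx hpos
      exact ⟨y', h1, Z, hZ, h2⟩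
    · intro Z' hZ' x x' h
      exact ⟨Z', hZ', h⟩
  · intro S _ M Z hZ hmax
    refine ⟨?_, ?_⟩
    · intro x
      refine hmax (fun a b => a = b) ⟨?_, ?_⟩ x x rfl
      · rintro a b rfl p
        exact le_rfl
      · rintro a y b ρ rfl _
        exact ⟨y, le_rfl, rfl⟩
    · intro x y z hxy hyz
      refine hmax (fun a c => ∃ b, Z a b ∧ Z b c) ⟨?_, ?_⟩ x z ⟨y, hxy, hyz⟩
      · rintro a c ⟨b, hab, hbc⟩ p
        exact (hZ.1 a b hab p).trans (hZ.1 b c hbc p)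
      · rintro a a' c ρ ⟨b, hab, hbc⟩ hpos
        obtain ⟨b', h1, h2⟩ := hZ.2 a a' b ρ hab hpos
        obtain ⟨c', h3, h4⟩ := hZ.2 b b' c ρ hbc (hpos.trans_le h1)
        exact ⟨c', h1.trans h3, b', h2, h4⟩
end
end

section
/- For any two FLTSs S and S', the largest crisp directed simulation between S and S' exists (i.e., there is a directed simulation containing every directed simulation between S and S'). Moreover, the identity relation {(x,x) | x ∈ S} is a crisp directed simulation between any FLTS S and itself, and the largest crisp directed auto-simulation of S is a pre-order (reflexive and transitive relation) on its set of states. -/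
open unitInterval

noncomputable section

/-- The largest crisp directed simulation between two FLTSs exists, the identity
relation is a crisp directed auto-simulation, and the largest crisp directed
auto-simulation of an FLTS is a pre-order (reflexive and transitive). -/
theorem largest_dirSimulation_exists_and_preorder {A P : Type} [Nonempty A] [Nonempty P] :
    (∀ (S S' : Type) [Nonempty S] [Nonempty S'] (M : FLTS A P S) (M' : FLTS A P S'),
      ∃ Z : S → S' → Prop, IsDirSimulation M M' Z ∧
        ∀ Z' : S → S' → Prop, IsDirSimulation M M' Z' → ∀ x x', Z' x x' → Z x x') ∧
    (∀ (S : Type) [Nonempty S] (M : FLTS A P S),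
      IsDirSimulation M M (fun x y => x = y)) ∧
    (∀ (S : Type) [Nonempty S] (M : FLTS A P S) (Z : S → S → Prop),
      IsDirSimulation M M Z →
      (∀ Z' : S → S → Prop, IsDirSimulation M M Z' → ∀ x y, Z' x y → Z x y) →
      Reflexive Z ∧ Transitive Z) := by
  have hid : ∀ (S : Type) [Nonempty S] (M : FLTS A P S),
      IsDirSimulation M M (fun x y => x = y) := by
    intro S _ M
    refine ⟨?_, ?_, ?_⟩
    · rintro x _ rfl p
      exact le_rfl
    · rintro x y _ ρ rfl _
      exact ⟨y, le_rfl, rfl⟩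
    · rintro x _ y ρ rfl _
      exact ⟨y, le_rfl, rfl⟩
  refine ⟨?_, hid, ?_⟩
  · intro S S' _ _ M M'
    refine ⟨fun x x' => ∃ Z, IsDirSimulation M M' Z ∧ Z x x', ⟨?_, ?_, ?_⟩, ?_⟩
    · rintro x x' ⟨Z, hZ, h⟩
      exact hZ.1 x x' h
    · rintro x y x' ρ ⟨Z, hZ, h⟩ hd
      obtain ⟨y', h1, h2⟩ := hZ.2.1 x y x' ρ h hd
      exact ⟨y', h1, Z, hZ, h2⟩
    · rintro x x' y' ρ ⟨Z, hZ, h⟩ hd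
      obtain ⟨y, h1, h2⟩ := hZ.2.2 x x' y' ρ h hd
      exact ⟨y, h1, Z, hZ, h2⟩
    · intro Z hZ x x' h
      exact ⟨Z, hZ, h⟩
  · intro S _ M Z hZ hmax
    refine ⟨fun x => hmax _ (hid S M) x x rfl, ?_⟩
    intro a b c hab hbc
    refine hmax (fun x z => ∃ y, Z x y ∧ Z y z) ⟨?_, ?_, ?_⟩ a c ⟨b, hab, hbc⟩
    · rintro x z ⟨y, h1, h2⟩ p
      exact (hZ.1 x y h1 p).trans (hZ.1 y z h2 p)
    · rintro x x₁ z ρ ⟨y, h1, h2⟩ hd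
      obtain ⟨y₁, hy, hy'⟩ := hZ.2.1 x x₁ y ρ h1 hd
      obtain ⟨z₁, hz, hz'⟩ := hZ.2.1 y y₁ z ρ h2 (hd.trans_le hy)
      exact ⟨z₁, hy.trans hz, y₁, hy', hz'⟩
    · rintro x z z₁ ρ ⟨y, h1, h2⟩ hd
      obtain ⟨y₁, hy, hy'⟩ := hZ.2.2 y z z₁ ρ h2 hd
      obtain ⟨x₁, hx, hx'⟩ := hZ.2.2 x y y₁ ρ h1 (hd.trans_le hy)
      exact ⟨x₁, hy.trans hx, y₁, hx', hy'⟩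
end
end
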